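/- arXiv:1405.4176 — 3 statements merged into one kernel-verified Lean document; each statement's English description precedes it below -/
import Mathlib

section
/- For a, b > 0, the function x ↦ (e^{-ax} - e^{-(a+b)x})/(1 - e^{-x}) on (0, ∞) is completely monotone if and only if b is a positive integer. -/
open Real

/-- A function is completely monotone on `(0,∞)` if it is smooth there and its
`n`-th derivatives alternate in sign. -/
def CompletelyMonotoneOn (g : ℝ → ℝ) : Prop :=
  ContDiffOn ℝ (⊤ : ℕ∞) g (Set.Ioi 0) ∧
    ∀ n : ℕ, ∀ x > (0:ℝ), 0 ≤ (-1) ^ n * iteratedDeriv n g x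

/-!
For `X ≥ 0` the Laplace transform `mgf (-X) μ` is completely monotone, and the atoms of the
distribution of `X` can be read off from it: `(e / s) ^ n` times the sign-adjusted `n`-th derivative
at `n / s` equals `∫ (X / s * exp (1 - X / s)) ^ n ∂μ`, which tends to `μ {X = s}` because
`u * exp (1 - u) ≤ 1` with equality only at `u = 1`. Hence a difference of two Laplace transforms is
completely monotone only if every atom in `(0, ∞)` of the subtracted measure is at most the
corresponding atom of the other one.

By the geometric series, `exp (-a x) / (1 - exp (-x))` is the Laplace transform of the sum of the
unit masses at `a + k`, `k : ℕ`. The atom at `a + b` of the subtracted measure must therefore be one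
of the points `a + k`, which makes `b` a natural number. When it is one, all but finitely many
masses cancel and the difference is the Laplace transform of the remaining ones.
-/

open Filter MeasureTheory ProbabilityTheory Set Topology

theorem CompletelyMonotoneOn.congr {f g : ℝ → ℝ} (hg : CompletelyMonotoneOn g)
    (hfg : EqOn f g (Ioi 0)) : CompletelyMonotoneOn f := by
  refine ⟨hg.1.congr hfg, fun n x hx ↦ ?_⟩
  rw [(hfg.eventuallyEq_of_mem (Ioi_mem_nhds hx)).iteratedDeriv_eq]
  exact hg.2 n x hx

theorem mul_exp_one_sub_lt_one {u : ℝ} (hu : u ≠ 1) : u * exp (1 - u) < 1 :=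
  calc u * exp (1 - u)
    _ = (u - 1 + 1) * exp (1 - u) := by rw [sub_add_cancel]
    _ < exp (u - 1) * exp (1 - u) := by gcongr; exact add_one_lt_exp (sub_ne_zero.2 hu)
    _ = 1 := by rw [← exp_add]; simp

theorem mul_exp_one_sub_eq_one_iff {u : ℝ} : u * exp (1 - u) = 1 ↔ u = 1 :=
  ⟨fun h ↦ by_contra fun hu ↦ (mul_exp_one_sub_lt_one hu).ne h, by rintro rfl; simp⟩

theorem mul_exp_one_sub_le_one (u : ℝ) : u * exp (1 - u) ≤ 1 := by
  rcases eq_or_ne u 1 with rfl | hu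
  · simp
  · exact (mul_exp_one_sub_lt_one hu).le

section LaplaceTransform

variable {Ω Ω' : Type*} [MeasurableSpace Ω] [MeasurableSpace Ω'] {μ : Measure Ω} {ν : Measure Ω'}
  {X : Ω → ℝ} {Y : Ω' → ℝ} {s t : ℝ}

theorem tendsto_integral_pow_measureReal_eq_one {p : Ω → ℝ} (hp : Integrable p μ)
    (hp0 : 0 ≤ᵐ[μ] p) (hp1 : p ≤ᵐ[μ] 1) :
    Tendsto (fun n : ℕ ↦ ∫ ω, p ω ^ n ∂μ) atTop (𝓝 (μ.real {ω | p ω = 1})) := by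
  have hone : NullMeasurableSet {ω | p ω = 1} μ :=
    hp.aemeasurable.nullMeasurableSet_preimage (measurableSet_singleton 1)
  have hlim : ∫ ω, {ω | p ω = 1}.indicator 1 ω ∂μ = μ.real {ω | p ω = 1} := by
    simp [integral_indicator₀ hone]
  rw [← hlim]
  refine tendsto_integral_filter_of_dominated_convergence p
    (.of_forall fun n ↦ hp.aestronglyMeasurable.pow n) ?_ hp ?_
  · filter_upwards [eventually_ne_atTop 0] with n hn
    filter_upwards [hp0, hp1] with ω h0 h1
    rw [norm_of_nonneg (pow_nonneg h0 n)]
    exact pow_le_of_le_one h0 h1 hn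
  · filter_upwards [hp0, hp1] with ω h0 h1
    by_cases h : p ω = 1
    · simp [h]
    · simpa [h] using tendsto_pow_atTop_nhds_zero_of_lt_one h0 (lt_of_le_of_ne h1 h)

theorem neg_one_pow_mul_iteratedDeriv_mgf_neg (ht : t ∈ interior (integrableExpSet (-X) μ))
    (n : ℕ) :
    (-1) ^ n * iteratedDeriv n (mgf (-X) μ) t = ∫ ω, X ω ^ n * exp (-(t * X ω)) ∂μ := by
  rw [iteratedDeriv_mgf ht, ← integral_const_mul]
  simp [← mul_assoc, ← mul_pow]

theorem Ioi_zero_subset_interior_integrableExpSet_neg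
    (hX : ∀ t > 0, Integrable (fun ω ↦ exp (-(t * X ω))) μ) :
    Ioi 0 ⊆ interior (integrableExpSet (-X) μ) :=
  interior_maximal (fun t ht ↦ by simpa [integrableExpSet] using hX t ht) isOpen_Ioi

theorem contDiffOn_mgf (n : WithTop ℕ∞) :
    ContDiffOn ℝ n (mgf X μ) (interior (integrableExpSet X μ)) :=
  analyticOnNhd_mgf.contDiffOn isOpen_interior.uniqueDiffOn

theorem completelyMonotoneOn_mgf_neg (hX0 : 0 ≤ᵐ[μ] X)
    (hX : Ioi 0 ⊆ interior (integrableExpSet (-X) μ)) :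
    CompletelyMonotoneOn (mgf (-X) μ) := by
  refine ⟨(contDiffOn_mgf _).mono hX, fun n x hx ↦ ?_⟩
  rw [neg_one_pow_mul_iteratedDeriv_mgf_neg (hX hx)]
  refine integral_nonneg_of_ae ?_
  filter_upwards [hX0] with ω hω
  exact mul_nonneg (pow_nonneg hω n) (exp_nonneg _)

/-- The `n`-th Post–Widder approximation at `s` to the atoms of the measure with Laplace transform
`g`, scaled so as to converge to the mass of the point `s` rather than to a density. -/
noncomputable def postWidderAtom (g : ℝ → ℝ) (s : ℝ) (n : ℕ) : ℝ :=
  (exp 1 / s) ^ n * ((-1) ^ n * iteratedDeriv n g (n / s))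

theorem postWidderAtom_mgf_neg {n : ℕ} (hn : (n / s : ℝ) ∈ interior (integrableExpSet (-X) μ)) :
    postWidderAtom (mgf (-X) μ) s n = ∫ ω, (X ω / s * exp (1 - X ω / s)) ^ n ∂μ := by
  rw [postWidderAtom, neg_one_pow_mul_iteratedDeriv_mgf_neg hn, ← integral_const_mul]
  congr with ω
  have hexp : exp (-(n / s * X ω)) * exp 1 ^ n = exp (1 - X ω / s) ^ n := by
    rw [← exp_nat_mul, ← exp_nat_mul, ← exp_add]
    ring_nf
  rw [mul_pow, ← hexp]
  ring

theorem tendsto_postWidderAtom_mgf_neg (hX0 : 0 ≤ᵐ[μ] X)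
    (hX : Ioi 0 ⊆ interior (integrableExpSet (-X) μ)) (hs : 0 < s) :
    Tendsto (postWidderAtom (mgf (-X) μ) s) atTop (𝓝 (μ.real {ω | X ω = s})) := by
  have h_int : Integrable (fun ω ↦ X ω / s * exp (1 - X ω / s)) μ := by
    have h := integrable_pow_mul_exp_of_mem_interior_integrableExpSet (hX (inv_pos.2 hs)) 1
    refine (h.const_mul (-(exp 1 / s))).congr (.of_forall fun ω ↦ ?_)
    simp only [Pi.neg_apply, sub_eq_add_neg, exp_add]
    ring_nf
  have hatom : {ω | X ω = s} = {ω | X ω / s * exp (1 - X ω / s) = 1} := by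
    simp only [mul_exp_one_sub_eq_one_iff, div_eq_one_iff_eq hs.ne']
  rw [hatom]
  refine (tendsto_integral_pow_measureReal_eq_one h_int ?_ ?_).congr' ?_
  · filter_upwards [hX0] with ω hω
    exact mul_nonneg (div_nonneg hω hs.le) (exp_nonneg _)
  · exact .of_forall fun ω ↦ mul_exp_one_sub_le_one _
  · filter_upwards [eventually_gt_atTop 0] with n hn
    exact (postWidderAtom_mgf_neg (hX (div_pos (Nat.cast_pos.2 hn) hs))).symm

theorem CompletelyMonotoneOn.measureReal_eq_le_of_mgf_neg_sub
    (h : CompletelyMonotoneOn (mgf (-X) μ - mgf (-Y) ν))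
    (hX0 : 0 ≤ᵐ[μ] X) (hX : Ioi 0 ⊆ interior (integrableExpSet (-X) μ))
    (hY0 : 0 ≤ᵐ[ν] Y) (hY : Ioi 0 ⊆ interior (integrableExpSet (-Y) ν)) (hs : 0 < s) :
    ν.real {ω | Y ω = s} ≤ μ.real {ω | X ω = s} := by
  refine le_of_tendsto_of_tendsto (tendsto_postWidderAtom_mgf_neg hY0 hY hs)
    (tendsto_postWidderAtom_mgf_neg hX0 hX hs) ?_
  filter_upwards [eventually_gt_atTop 0] with n hn
  have hns : 0 < n / s := div_pos (Nat.cast_pos.2 hn) hs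
  have hderiv := h.2 n _ hns
  rw [iteratedDeriv_sub (analyticAt_mgf (hX hns)).contDiffAt (analyticAt_mgf (hY hns)).contDiffAt,
    mul_sub, sub_nonneg] at hderiv
  exact mul_le_mul_of_nonneg_left hderiv (by positivity)

end LaplaceTransform

section ArithmeticProgression

variable (a : ℝ)

theorem exp_neg_mul_add_natCast (x : ℝ) (k : ℕ) :
    exp (-(x * (a + k))) = exp (-a * x) * exp (-x) ^ k := by
  rw [← exp_nat_mul, ← exp_add]
  ring_nf

theorem integrable_exp_neg_mul_add_natCast {x : ℝ} (hx : 0 < x) :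
    Integrable (fun k : ℕ ↦ exp (-(x * (a + k)))) .count := by
  simp only [integrable_count_iff, exp_neg_mul_add_natCast]
  have hlt : exp (-x) < 1 := exp_lt_one_iff.2 (neg_neg_of_pos hx)
  exact ((summable_geometric_of_lt_one (exp_nonneg _) hlt).mul_left _).norm

theorem mgf_neg_add_natCast_count {x : ℝ} (hx : 0 < x) :
    mgf (-fun k : ℕ ↦ a + k) .count x = exp (-a * x) / (1 - exp (-x)) := by
  have hmgf : mgf (-fun k : ℕ ↦ a + k) .count x = ∫ k : ℕ, exp (-(x * (a + k))) ∂.count := by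
    simp only [mgf, Pi.neg_apply, mul_neg]
  rw [hmgf, integral_countable (integrable_exp_neg_mul_add_natCast a hx)]
  simp only [count_real_singleton, one_smul, exp_neg_mul_add_natCast]
  have hlt : exp (-x) < 1 := exp_lt_one_iff.2 (neg_neg_of_pos hx)
  rw [tsum_mul_left, tsum_geometric_of_lt_one (exp_nonneg _) hlt, div_eq_mul_inv]

theorem mgf_neg_add_fin_count (n : ℕ) {x : ℝ} (hx : x ≠ 0) :
    mgf (-fun k : Fin n ↦ a + k) .count x =
      (exp (-a * x) - exp (-(a + n) * x)) / (1 - exp (-x)) := by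
  have hne : 1 - exp (-x) ≠ 0 := sub_ne_zero.2 fun h ↦ hx (by simpa using h.symm)
  have hlast : exp (-(a + n) * x) = exp (-a * x) * exp (-x) ^ n := by
    rw [← exp_neg_mul_add_natCast]
    ring_nf
  simp only [mgf, integral_count, Pi.neg_apply, mul_neg, exp_neg_mul_add_natCast]
  rw [eq_div_iff hne, ← Finset.mul_sum, Fin.sum_univ_eq_sum_range (exp (-x) ^ ·), mul_assoc,
    geom_sum_mul_neg, hlast, mul_one_sub]

theorem eqOn_mgf_neg_sub_add_natCast_count (c : ℝ) :
    EqOn (mgf (-fun k : ℕ ↦ a + k) .count - mgf (-fun k : ℕ ↦ c + k) .count)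
      (fun x ↦ (exp (-a * x) - exp (-c * x)) / (1 - exp (-x))) (Ioi 0) := fun x hx ↦ by
  simp only [Pi.sub_apply, mgf_neg_add_natCast_count _ hx, sub_div]

variable {a}

theorem completelyMonotoneOn_exp_sub_exp_div_of_natCast (ha : 0 ≤ a) (n : ℕ) :
    CompletelyMonotoneOn (fun x ↦ (exp (-a * x) - exp (-(a + n) * x)) / (1 - exp (-x))) :=
  (completelyMonotoneOn_mgf_neg (X := fun k : Fin n ↦ a + k) (μ := .count)
    (.of_forall fun _ ↦ by positivity)
    (Ioi_zero_subset_interior_integrableExpSet_neg fun _ _ ↦ .of_finite)).congr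
    fun _ hx ↦ (mgf_neg_add_fin_count a n (ne_of_gt hx)).symm

theorem CompletelyMonotoneOn.exists_natCast_of_exp_sub_exp_div {c : ℝ} (ha : 0 ≤ a) (hc : 0 < c)
    (h : CompletelyMonotoneOn (fun x ↦ (exp (-a * x) - exp (-c * x)) / (1 - exp (-x)))) :
    ∃ n : ℕ, c = a + n := by
  have h_conv (d : ℝ) := Ioi_zero_subset_interior_integrableExpSet_neg
    (X := fun k : ℕ ↦ d + k) fun t ht ↦ integrable_exp_neg_mul_add_natCast d ht
  have hatoms := (h.congr (eqOn_mgf_neg_sub_add_natCast_count a c)).measureReal_eq_le_of_mgf_neg_sub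
    (.of_forall fun k ↦ by positivity) (h_conv a) (.of_forall fun k ↦ by positivity) (h_conv c) hc
  have hc_atom : Measure.count.real {k : ℕ | c + k = c} = 1 := by simp
  by_contra! hne
  have ha_atom : {k : ℕ | a + k = c} = ∅ := eq_empty_of_forall_notMem fun k hk ↦ hne k hk.symm
  rw [hc_atom, ha_atom, measureReal_empty] at hatoms
  exact hatoms.not_gt one_pos

end ArithmeticProgression

theorem cm_iff_integer (a b : ℝ) (ha : 0 < a) (hb : 0 < b) :
    CompletelyMonotoneOn
        (fun x => (Real.exp (-a * x) - Real.exp (-(a + b) * x)) / (1 - Real.exp (-x)))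
      ↔ ∃ n : ℕ, b = n + 1 := by
  constructor
  · intro h
    obtain ⟨n, hn⟩ := h.exists_natCast_of_exp_sub_exp_div ha.le (add_pos ha hb)
    obtain rfl : b = n := add_left_cancel hn
    exact ⟨n - 1, by rw [Nat.cast_pred (Nat.cast_pos.1 hb), sub_add_cancel]⟩
  · rintro ⟨n, rfl⟩
    exact_mod_cast completelyMonotoneOn_exp_sub_exp_div_of_natCast ha.le (n + 1)
end

section
/- For a, b > 0 and λ ≥ 0, Γ(a+λ)Γ(a+b)/(Γ(a)Γ(a+b+λ)) = exp(-∫₀^∞ (1 - e^{-λx}) (e^{-ax} - e^{-(a+b)x})/(x(1 - e^{-x})) dx). -/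
/-!
Since `1 / (1 - e⁻ˣ) = ∑ e⁻ᵏˣ`, cutting the geometric series off after `n` terms multiplies the
integrand by `1 - e⁻ⁿˣ` and turns it into a finite sum of Frullani integrands, whose integrals are
logarithms. The sum of these logarithms is the combination of Gauss's sequences
`x log n + log n! - ∑ log (x + k)` for `log Γ` in which the terms in `log n` and `log n!` cancel.
The full integrand is integrable and dominates the truncated ones, so `n → ∞` gives the logarithm
of the Gamma quotient.
-/

open Real MeasureTheory

open Set Filter Topology BohrMollerup

lemma abs_exp_neg_mul_sub_exp_neg_mul_le (p q : ℝ) {x : ℝ} (hx : 0 ≤ x) :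
    |exp (-p * x) - exp (-q * x)| ≤ |p - q| * x * exp (-min p q * x) := by
  wlog hpq : p ≤ q generalizing p q
  · simpa only [abs_sub_comm, min_comm] using this q p (le_of_not_ge hpq)
  have hfactor : exp (-p * x) - exp (-q * x) = (1 - exp (-((q - p) * x))) * exp (-p * x) := by
    rw [sub_mul, ← exp_add]
    ring_nf
  have hnonneg : 0 ≤ 1 - exp (-((q - p) * x)) := by
    simpa using mul_nonneg (sub_nonneg.2 hpq) hx
  rw [min_eq_left hpq, abs_sub_comm p q, abs_of_nonneg (sub_nonneg.2 hpq), hfactor,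
    abs_of_nonneg (by positivity)]
  gcongr
  exact sub_le_comm.1 (one_sub_le_exp_neg _)

lemma div_one_sub_exp_neg_le_one_add {x : ℝ} (hx : 0 < x) : x / (1 - exp (-x)) ≤ 1 + x := by
  have hle : (1 + x) * exp (-x) ≤ 1 := by
    rw [exp_neg, ← div_eq_mul_inv, div_le_one (exp_pos x), add_comm]
    exact add_one_le_exp x
  rw [div_le_iff₀ (by simpa using hx)]
  linarith

lemma integrableOn_one_add_mul_exp_neg_mul {m : ℝ} (hm : 0 < m) :
    IntegrableOn (fun x ↦ (1 + x) * exp (-m * x)) (Ioi 0) := by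
  have hlin : IntegrableOn (fun x ↦ x * exp (-m * x)) (Ioi 0) := by
    simpa using integrableOn_rpow_mul_exp_neg_mul_rpow (s := 1) (p := 1) (by norm_num) one_pos hm
  simp only [add_mul, one_mul]
  exact (integrableOn_exp_mul_Ioi (neg_lt_zero.2 hm) 0).add hlin

/-- Frullani's integrand for `x ↦ exp (-x)`; division by zero gives it the value `0` at `x = 0`. -/
noncomputable def frullaniKernel (p q x : ℝ) : ℝ :=
  x⁻¹ * (exp (-p * x) - exp (-q * x))

section FrullaniKernel

variable {p q : ℝ}

@[fun_prop]
lemma measurable_frullaniKernel : Measurable (frullaniKernel p q) := by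
  unfold frullaniKernel
  fun_prop

lemma integrableOn_frullaniKernel (hp : 0 < p) (hq : 0 < q) :
    IntegrableOn (frullaniKernel p q) (Ioi 0) := by
  have hbound : IntegrableOn (fun x ↦ |p - q| * exp (-min p q * x)) (Ioi 0) :=
    (integrableOn_exp_mul_Ioi (neg_lt_zero.2 (lt_min hp hq)) 0).const_mul _
  refine hbound.mono' (by fun_prop) (ae_restrict_of_forall_mem measurableSet_Ioi fun x hx ↦ ?_)
  rw [mem_Ioi] at hx
  rw [frullaniKernel, norm_mul, norm_inv, norm_of_nonneg hx.le, inv_mul_le_iff₀ hx, norm_eq_abs]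
  linarith [abs_exp_neg_mul_sub_exp_neg_mul_le p q hx.le]

lemma integral_frullaniKernel (hp : 0 < p) (hq : 0 < q) :
    ∫ x in Ioi 0, frullaniKernel p q x = log q - log p := by
  have hcont : Continuous fun x : ℝ ↦ exp (-x) := by fun_prop
  have hzero : Tendsto (fun x : ℝ ↦ exp (-x)) (𝓝[>] 0) (𝓝 1) := by
    simpa using (hcont.tendsto 0).mono_left nhdsWithin_le_nhds
  have hint : IntegrableOn (fun x ↦ x⁻¹ • (exp (-(p * x)) - exp (-(q * x)))) (Ioi 0) :=
    (integrableOn_frullaniKernel hp hq).congr_fun (fun x _ ↦ by simp [frullaniKernel])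
      measurableSet_Ioi
  simpa [frullaniKernel, log_div hq.ne' hp.ne'] using
    Frullani.integral_Ioi_eq (hcont.locallyIntegrable.locallyIntegrableOn _) hp hq hzero
      tendsto_exp_neg_atTop_nhds_zero hint

end FrullaniKernel

/-- The integrand of the Malmstén-type formula for
`log (Γ(a) Γ(a + b + l) / (Γ(a + l) Γ(a + b)))`; division by zero gives it the value `0` at
`x = 0`. -/
noncomputable def malmstenKernel (a b l x : ℝ) : ℝ :=
  (1 - exp (-l * x)) * (exp (-a * x) - exp (-(a + b) * x)) / (x * (1 - exp (-x)))

section MalmstenKernel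

variable {a b l : ℝ}

@[fun_prop]
lemma measurable_malmstenKernel : Measurable (malmstenKernel a b l) := by
  unfold malmstenKernel
  fun_prop

lemma malmstenKernel_mul_one_sub_exp_neg_pow (n : ℕ) {x : ℝ} (hx : x ≠ 0) :
    malmstenKernel a b l x * (1 - exp (-x) ^ n) =
      ∑ k ∈ Finset.range n,
        (frullaniKernel (a + k) (a + b + k) x - frullaniKernel (a + l + k) (a + b + l + k) x) := by
  have hshift (c : ℝ) (k : ℕ) : exp (-(c + k) * x) = exp (-c * x) * exp (-x) ^ k := by
    rw [← exp_nat_mul, ← exp_add]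
    ring_nf
  have hadd (c : ℝ) : exp (-(c + l) * x) = exp (-c * x) * exp (-l * x) := by
    rw [← exp_add]
    ring_nf
  have hterm (k : ℕ) :
      frullaniKernel (a + k) (a + b + k) x - frullaniKernel (a + l + k) (a + b + l + k) x =
        x⁻¹ * ((1 - exp (-l * x)) * (exp (-a * x) - exp (-(a + b) * x))) * exp (-x) ^ k := by
    simp only [frullaniKernel, hshift, hadd]
    ring
  have hne : 1 - exp (-x) ≠ 0 := sub_ne_zero.2 (Ne.symm (by simpa using hx))
  rw [Finset.sum_congr rfl fun k _ ↦ hterm k, ← Finset.mul_sum, ← geom_sum_mul_neg, malmstenKernel]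
  field_simp

lemma abs_malmstenKernel_le {x : ℝ} (hx : 0 < x) :
    |malmstenKernel a b l x| ≤
      |l| * |b| * ((1 + x) * exp (-(min 0 l + min a (a + b)) * x)) := by
  have hl : |1 - exp (-l * x)| ≤ |l| * x * exp (-min 0 l * x) := by
    simpa using abs_exp_neg_mul_sub_exp_neg_mul_le 0 l hx.le
  have hb : |exp (-a * x) - exp (-(a + b) * x)| ≤ |b| * x * exp (-min a (a + b) * x) := by
    simpa using abs_exp_neg_mul_sub_exp_neg_mul_le a (a + b) hx.le
  have hden : 0 < 1 - exp (-x) := by simpa using hx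
  calc |malmstenKernel a b l x|
    _ = |1 - exp (-l * x)| * |exp (-a * x) - exp (-(a + b) * x)| / (x * (1 - exp (-x))) := by
      rw [malmstenKernel, abs_div, abs_mul, abs_of_pos (mul_pos hx hden)]
    _ ≤ |l| * x * exp (-min 0 l * x) * (|b| * x * exp (-min a (a + b) * x)) /
        (x * (1 - exp (-x))) := by gcongr
    _ = |l| * |b| * (x / (1 - exp (-x)) * exp (-(min 0 l + min a (a + b)) * x)) := by
      rw [neg_add, add_mul, exp_add]
      field_simp
    _ ≤ |l| * |b| * ((1 + x) * exp (-(min 0 l + min a (a + b)) * x)) := by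
      gcongr
      exact div_one_sub_exp_neg_le_one_add hx

variable (ha : 0 < a) (hab : 0 < a + b) (hal : 0 < a + l) (habl : 0 < a + b + l)
include ha hab hal habl

lemma integrableOn_malmstenKernel : IntegrableOn (malmstenKernel a b l) (Ioi 0) := by
  have hm : 0 < min 0 l + min a (a + b) := by
    rcases min_choice 0 l with h | h <;> rcases min_choice a (a + b) with h' | h' <;>
      rw [h, h'] <;> linarith
  exact ((integrableOn_one_add_mul_exp_neg_mul hm).const_mul (|l| * |b|)).mono' (by fun_prop)
    (ae_restrict_of_forall_mem measurableSet_Ioi fun _ hx ↦ abs_malmstenKernel_le hx)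

lemma integral_malmstenKernel_mul_one_sub_exp_neg_pow (n : ℕ) :
    ∫ x in Ioi 0, malmstenKernel a b l x * (1 - exp (-x) ^ (n + 1)) =
      logGammaSeq a n + logGammaSeq (a + b + l) n -
        (logGammaSeq (a + l) n + logGammaSeq (a + b) n) := by
  have hint₁ (k : ℕ) : IntegrableOn (frullaniKernel (a + k) (a + b + k)) (Ioi 0) :=
    integrableOn_frullaniKernel (by positivity) (by positivity)
  have hint₂ (k : ℕ) : IntegrableOn (frullaniKernel (a + l + k) (a + b + l + k)) (Ioi 0) :=
    integrableOn_frullaniKernel (by positivity) (by positivity)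
  have hterm (k : ℕ) : ∫ x in Ioi 0,
      (frullaniKernel (a + k) (a + b + k) x - frullaniKernel (a + l + k) (a + b + l + k) x) =
        log (a + b + k) - log (a + k) - (log (a + b + l + k) - log (a + l + k)) := by
    rw [integral_sub (hint₁ k) (hint₂ k),
      integral_frullaniKernel (by positivity) (by positivity),
      integral_frullaniKernel (by positivity) (by positivity)]
  rw [setIntegral_congr_fun measurableSet_Ioi fun x hx ↦
      malmstenKernel_mul_one_sub_exp_neg_pow (n + 1) (ne_of_gt hx),
    integral_finsetSum _ fun k _ ↦ by exact (hint₁ k).sub (hint₂ k)]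
  simp only [hterm, logGammaSeq, Finset.sum_sub_distrib]
  ring

lemma tendsto_integral_malmstenKernel_mul_one_sub_exp_neg_pow :
    Tendsto (fun n : ℕ ↦ ∫ x in Ioi 0, malmstenKernel a b l x * (1 - exp (-x) ^ (n + 1))) atTop
      (𝓝 (∫ x in Ioi 0, malmstenKernel a b l x)) := by
  refine tendsto_integral_of_dominated_convergence (fun x ↦ |malmstenKernel a b l x|)
    (fun n ↦ by fun_prop) (integrableOn_malmstenKernel ha hab hal habl).abs
    (fun n ↦ ae_restrict_of_forall_mem measurableSet_Ioi fun x hx ↦ ?_)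
    (ae_restrict_of_forall_mem measurableSet_Ioi fun x hx ↦ ?_)
  · have hpow : exp (-x) ^ (n + 1) ≤ 1 :=
      pow_le_one₀ (exp_pos _).le (exp_le_one_iff.2 (neg_nonpos.2 (le_of_lt hx)))
    rw [norm_mul, norm_eq_abs, norm_of_nonneg (sub_nonneg.2 hpow)]
    exact mul_le_of_le_one_right (abs_nonneg _) (sub_le_self _ (by positivity))
  · have hpow : Tendsto (fun n : ℕ ↦ exp (-x) ^ (n + 1)) atTop (𝓝 0) :=
      (tendsto_pow_atTop_nhds_zero_of_lt_one (exp_pos _).le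
        (exp_lt_one_iff.2 (neg_lt_zero.2 hx))).comp (tendsto_add_atTop_nat 1)
    simpa using (hpow.const_sub 1).const_mul (malmstenKernel a b l x)

lemma integral_malmstenKernel :
    ∫ x in Ioi 0, malmstenKernel a b l x =
      log (Gamma a) + log (Gamma (a + b + l)) -
        (log (Gamma (a + l)) + log (Gamma (a + b))) := by
  refine tendsto_nhds_unique
    (tendsto_integral_malmstenKernel_mul_one_sub_exp_neg_pow ha hab hal habl) ?_
  simp only [integral_malmstenKernel_mul_one_sub_exp_neg_pow ha hab hal habl]
  exact ((tendsto_log_gamma ha).add (tendsto_log_gamma habl)).sub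
    ((tendsto_log_gamma hal).add (tendsto_log_gamma hab))

end MalmstenKernel

theorem malmsten_beta_laplace_general {a b l : ℝ}
    (ha : 0 < a) (hab : 0 < a + b) (hal : 0 < a + l) (habl : 0 < a + b + l) :
    Gamma (a + l) * Gamma (a + b) / (Gamma a * Gamma (a + b + l)) =
      exp (-∫ x in Ioi 0, malmstenKernel a b l x) := by
  rw [integral_malmstenKernel ha hab hal habl, neg_sub, exp_sub, exp_add, exp_add,
    exp_log (Gamma_pos_of_pos ha), exp_log (Gamma_pos_of_pos hab),
    exp_log (Gamma_pos_of_pos hal), exp_log (Gamma_pos_of_pos habl)]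

theorem malmsten_beta_laplace (a b l : ℝ) (ha : 0 < a) (hb : 0 < b) (hl : 0 ≤ l) :
    Gamma (a + l) * Gamma (a + b) / (Gamma a * Gamma (a + b + l))
      = Real.exp (-∫ x in Set.Ioi (0:ℝ),
          (1 - Real.exp (-l * x)) * (Real.exp (-a * x) - Real.exp (-(a + b) * x))
            / (x * (1 - Real.exp (-x)))) :=
  malmsten_beta_laplace_general ha (by positivity) (by positivity) (by positivity)
end

section
/- For all a, b, s > 0, the function λ ↦ Γ(a+λ)Γ(a+b+s+λ)/(Γ(a+b+λ)Γ(a+s+λ)) is completely monotone on (0, ∞). -/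
open Real

/-!
Euler's limit formula turns the ratio `Γ(p + z) Γ(q + z) / (Γ(u + z) Γ(v + z))`, `p + q = u + v`,
into the product over `k ≥ 0` of
`(u + k + z) (v + k + z) / ((p + k + z) (q + k + z))
  = 1 + (u v - p q) / ((p + k + z) (q + k + z))`.
For `p = a`, `q = a + b + s`, `u = a + b`, `v = a + s` the constant `u v - p q` equals `b s > 0`, so
every factor is completely monotone, and complete monotonicity passes to products. On the complex
right half-plane the product converges locally uniformly, hence with all its derivatives, so the
sign conditions survive in the limit.
-/

open Filter Topology
open scoped ComplexOrder

section Holomorphic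

variable {U : Set ℂ} {f : ℂ → ℂ}

theorem differentiableOn_iteratedDeriv (hU : IsOpen U) (hf : DifferentiableOn ℂ f U) (n : ℕ) :
    DifferentiableOn ℂ (iteratedDeriv n f) U := by
  rw [iteratedDeriv_eq_iterate]
  exact ((hf.analyticOnNhd hU).iterated_deriv n).differentiableOn

theorem tendstoLocallyUniformlyOn_iteratedDeriv {ι : Type*} {l : Filter ι} {F : ι → ℂ → ℂ}
    (hU : IsOpen U) (h : TendstoLocallyUniformlyOn F f l U)
    (hF : ∀ᶠ i in l, DifferentiableOn ℂ (F i) U) (n : ℕ) :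
    TendstoLocallyUniformlyOn (fun i ↦ iteratedDeriv n (F i)) (iteratedDeriv n f) l U := by
  induction n with
  | zero => simpa only [iteratedDeriv_zero] using h
  | succ n ih =>
    simp only [iteratedDeriv_succ]
    exact ih.deriv (hF.mono fun i hi ↦ differentiableOn_iteratedDeriv hU hi n) hU

theorem ofReal_iteratedDeriv_of_eqOn_real {g : ℝ → ℝ} (hU : IsOpen U)
    (hf : DifferentiableOn ℂ f U) (hg : ∀ x : ℝ, (x : ℂ) ∈ U → (g x : ℂ) = f x) (n : ℕ) :
    ∀ x : ℝ, (x : ℂ) ∈ U → ((iteratedDeriv n g x : ℝ) : ℂ) = iteratedDeriv n f x := by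
  induction n with
  | zero => simpa only [iteratedDeriv_zero] using hg
  | succ n ih =>
    intro x hx
    have hderiv : HasDerivAt (iteratedDeriv n f) (iteratedDeriv (n + 1) f x) x := by
      rw [iteratedDeriv_succ]
      exact ((differentiableOn_iteratedDeriv hU hf n).differentiableAt
        (hU.mem_nhds hx)).hasDerivAt
    have heq : (fun y : ℝ ↦ ((iteratedDeriv n g y : ℝ) : ℂ)) =ᶠ[𝓝 x] fun y ↦ iteratedDeriv n f y :=
      (Complex.continuous_ofReal.continuousAt.eventually_mem (hU.mem_nhds hx)).mono ih
    have hre : iteratedDeriv n g =ᶠ[𝓝 x] fun y ↦ (iteratedDeriv n f y).re :=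
      heq.mono fun y hy ↦ congrArg Complex.re hy
    have hgderiv : HasDerivAt (iteratedDeriv n g) (iteratedDeriv (n + 1) g x) x := by
      rw [iteratedDeriv_succ]
      exact (hderiv.real_of_complex.congr_of_eventuallyEq hre).differentiableAt.hasDerivAt
    exact hgderiv.ofReal_comp.unique (hderiv.comp_ofReal.congr_of_eventuallyEq heq)

end Holomorphic

/-- The open right half-plane in `ℂ`, on which the functions below are holomorphic. -/
def rightHalfPlane : Set ℂ := {z | 0 < z.re}

theorem isOpen_rightHalfPlane : IsOpen rightHalfPlane :=
  isOpen_lt continuous_const Complex.continuous_re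

theorem ofReal_mem_rightHalfPlane {x : ℝ} : (x : ℂ) ∈ rightHalfPlane ↔ 0 < x := by
  rw [rightHalfPlane, Set.mem_ofPred_eq, Complex.ofReal_re]

theorem re_add_pos_of_mem_rightHalfPlane {w z : ℂ} (hw : 0 ≤ w.re) (hz : z ∈ rightHalfPlane) :
    0 < (w + z).re := by
  rw [Complex.add_re]
  exact add_pos_of_nonneg_of_pos hw hz

/-- Complete monotonicity of a holomorphic function on the right half-plane. In the order of `ℂ`
the sign condition also says that the derivatives are real on the positive axis. -/
structure HolomorphicCompletelyMonotone (f : ℂ → ℂ) : Prop where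
  differentiableOn : DifferentiableOn ℂ f rightHalfPlane
  alternating (n : ℕ) {x : ℝ} (hx : 0 < x) : 0 ≤ (-1) ^ n * iteratedDeriv n f x

namespace HolomorphicCompletelyMonotone

variable {f g : ℂ → ℂ}

theorem contDiffAt (hf : HolomorphicCompletelyMonotone f) {x : ℝ} (hx : 0 < x) {n : WithTop ℕ∞} :
    ContDiffAt ℂ n f x :=
  (hf.differentiableOn.analyticAt
    (isOpen_rightHalfPlane.mem_nhds (ofReal_mem_rightHalfPlane.2 hx))).contDiffAt

theorem const {c : ℂ} (hc : 0 ≤ c) : HolomorphicCompletelyMonotone fun _ ↦ c where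
  differentiableOn := differentiableOn_const c
  alternating n _ _ := by
    rcases n with _ | n
    · simpa only [iteratedDeriv_zero, pow_zero, one_mul] using hc
    · simp only [iteratedDeriv_const, Nat.succ_ne_zero, if_false, mul_zero, le_refl]

theorem inv_const_add {d : ℝ} (hd : 0 ≤ d) :
    HolomorphicCompletelyMonotone fun z ↦ ((d : ℂ) + z)⁻¹ where
  differentiableOn z hz := by
    have hne : (d : ℂ) + z ≠ 0 :=
      Complex.ne_zero_of_re_pos (re_add_pos_of_mem_rightHalfPlane (by simpa using hd) hz)
    exact ((differentiableAt_id.const_add _).inv hne).differentiableWithinAt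
  alternating n x hx := by
    have hderiv : iteratedDeriv n (fun z ↦ ((d : ℂ) + z)⁻¹) x =
        (-1) ^ n * (n.factorial * ((d : ℂ) + x) ^ (-1 - n : ℤ)) := by
      have h := congrFun (iter_deriv_inv_linear n 1 (d : ℂ)) x
      simpa only [iteratedDeriv_eq_iterate, one_mul, one_pow, mul_one, add_comm, mul_assoc] using h
    have hreal : (n.factorial : ℂ) * ((d : ℂ) + x) ^ (-1 - n : ℤ) =
        ((n.factorial * (d + x) ^ (-1 - n : ℤ) : ℝ) : ℂ) := by
      push_cast
      rfl
    rw [hderiv, ← mul_assoc, ← mul_pow, neg_one_mul, neg_neg, one_pow, one_mul, hreal,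
      Complex.zero_le_real]
    positivity

theorem add (hf : HolomorphicCompletelyMonotone f) (hg : HolomorphicCompletelyMonotone g) :
    HolomorphicCompletelyMonotone (f + g) where
  differentiableOn := hf.differentiableOn.add hg.differentiableOn
  alternating n x hx := by
    rw [iteratedDeriv_add (hf.contDiffAt hx) (hg.contDiffAt hx), mul_add]
    exact add_nonneg (hf.alternating n hx) (hg.alternating n hx)

theorem mul (hf : HolomorphicCompletelyMonotone f) (hg : HolomorphicCompletelyMonotone g) :
    HolomorphicCompletelyMonotone (f * g) where
  differentiableOn := hf.differentiableOn.mul hg.differentiableOn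
  alternating n x hx := by
    rw [iteratedDeriv_mul (hf.contDiffAt hx) (hg.contDiffAt hx), Finset.mul_sum]
    refine Finset.sum_nonneg fun i hi ↦ ?_
    have hsign : (-1 : ℂ) ^ n = (-1) ^ i * (-1) ^ (n - i) := by
      rw [← pow_add, Nat.add_sub_cancel' (Finset.mem_range_succ_iff.1 hi)]
    calc (0 : ℂ)
        ≤ n.choose i * (((-1) ^ i * iteratedDeriv i f x) *
            ((-1) ^ (n - i) * iteratedDeriv (n - i) g x)) :=
          mul_nonneg (Nat.cast_nonneg _)
            (mul_nonneg (hf.alternating i hx) (hg.alternating (n - i) hx))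
      _ = (-1) ^ n * (n.choose i * iteratedDeriv i f x * iteratedDeriv (n - i) g x) := by
          rw [hsign]
          ring

theorem prod {ι : Type*} {F : ι → ℂ → ℂ} (t : Finset ι)
    (hF : ∀ i ∈ t, HolomorphicCompletelyMonotone (F i)) :
    HolomorphicCompletelyMonotone (∏ i ∈ t, F i) :=
  Finset.prod_induction F HolomorphicCompletelyMonotone (fun _ _ ↦ mul) (const zero_le_one) hF

theorem of_tendstoLocallyUniformlyOn {ι : Type*} {l : Filter ι} [l.NeBot] {F : ι → ℂ → ℂ}
    (h : TendstoLocallyUniformlyOn F f l rightHalfPlane)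
    (hF : ∀ᶠ i in l, HolomorphicCompletelyMonotone (F i)) : HolomorphicCompletelyMonotone f := by
  have hdiff := hF.mono fun i hi ↦ hi.differentiableOn
  refine ⟨h.differentiableOn hdiff isOpen_rightHalfPlane, fun n x hx ↦ ?_⟩
  have hlim : Tendsto (fun i ↦ iteratedDeriv n (F i) x) l (𝓝 (iteratedDeriv n f x)) :=
    (tendstoLocallyUniformlyOn_iteratedDeriv isOpen_rightHalfPlane h hdiff n).tendsto_at
      (ofReal_mem_rightHalfPlane.2 hx)
  exact ge_of_tendsto (hlim.const_mul _) (hF.mono fun i hi ↦ hi.alternating n hx)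

theorem of_hasProdLocallyUniformlyOn {ι : Type*} {F : ι → ℂ → ℂ}
    (h : HasProdLocallyUniformlyOn F f rightHalfPlane)
    (hF : ∀ i, HolomorphicCompletelyMonotone (F i)) : HolomorphicCompletelyMonotone f := by
  rw [hasProdLocallyUniformlyOn_iff_tendstoLocallyUniformlyOn] at h
  refine of_tendstoLocallyUniformlyOn h (.of_forall fun t ↦ ?_)
  simpa only [Finset.prod_fn] using prod t fun i _ ↦ hF i

theorem completelyMonotoneOn (hf : HolomorphicCompletelyMonotone f) {φ : ℝ → ℝ}
    (hφ : ∀ x : ℝ, 0 < x → (φ x : ℂ) = f x) : CompletelyMonotoneOn φ := by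
  refine ⟨?_, fun n x hx ↦ ?_⟩
  · have hre : ContDiffOn ℝ (⊤ : ℕ∞) (fun x : ℝ ↦ (f x).re) (Set.Ioi 0) := fun x hx ↦
      (hf.contDiffAt hx).real_of_complex.contDiffWithinAt
    exact hre.congr fun x hx ↦ congrArg Complex.re (hφ x hx)
  · have hderiv : ((iteratedDeriv n φ x : ℝ) : ℂ) = iteratedDeriv n f x :=
      ofReal_iteratedDeriv_of_eqOn_real isOpen_rightHalfPlane hf.differentiableOn
        (fun y hy ↦ hφ y (ofReal_mem_rightHalfPlane.1 hy)) n x (ofReal_mem_rightHalfPlane.2 hx)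
    have hsign := hf.alternating n hx
    rw [← hderiv] at hsign
    exact_mod_cast hsign

end HolomorphicCompletelyMonotone

section GammaRatio

variable {p q u v : ℂ}

theorem GammaSeq_mul_div_GammaSeq_mul (h : p + q = u + v) {n : ℕ} (hn : n ≠ 0) :
    Complex.GammaSeq p n * Complex.GammaSeq q n / (Complex.GammaSeq u n * Complex.GammaSeq v n) =
      ∏ k ∈ Finset.range (n + 1), (u + k) * (v + k) / ((p + k) * (q + k)) := by
  have hn' : (n : ℂ) ≠ 0 := Nat.cast_ne_zero.2 hn
  have hpow : (n : ℂ) ^ p * (n : ℂ) ^ q = (n : ℂ) ^ u * (n : ℂ) ^ v := by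
    rw [← Complex.cpow_add _ _ hn', ← Complex.cpow_add _ _ hn', h]
  have hnum : (n : ℂ) ^ p * n.factorial * ((n : ℂ) ^ q * n.factorial) =
      (n : ℂ) ^ u * n.factorial * ((n : ℂ) ^ v * n.factorial) := by
    rw [mul_mul_mul_comm, hpow, mul_mul_mul_comm]
  have hne : (n : ℂ) ^ u * n.factorial * ((n : ℂ) ^ v * n.factorial) ≠ 0 := by
    have hfac : (n.factorial : ℂ) ≠ 0 := Nat.cast_ne_zero.2 n.factorial_ne_zero
    simp [hn', hfac]
  simp only [Complex.GammaSeq, Finset.prod_div_distrib, Finset.prod_mul_distrib]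
  rw [div_mul_div_comm, div_mul_div_comm, hnum, div_div_div_cancel_left' _ _ hne]

theorem tendsto_prod_range_Gamma_mul_div_Gamma_mul (h : p + q = u + v) (hu : Complex.Gamma u ≠ 0)
    (hv : Complex.Gamma v ≠ 0) :
    Tendsto (fun n ↦ ∏ k ∈ Finset.range n, (u + k) * (v + k) / ((p + k) * (q + k))) atTop
      (𝓝 (Complex.Gamma p * Complex.Gamma q / (Complex.Gamma u * Complex.Gamma v))) := by
  rw [← tendsto_add_atTop_iff_nat 1]
  have hseq := ((Complex.GammaSeq_tendsto_Gamma p).mul (Complex.GammaSeq_tendsto_Gamma q)).div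
    ((Complex.GammaSeq_tendsto_Gamma u).mul (Complex.GammaSeq_tendsto_Gamma v)) (mul_ne_zero hu hv)
  exact hseq.congr' ((eventually_ne_atTop 0).mono fun n hn ↦ GammaSeq_mul_div_GammaSeq_mul h hn)

/-- The deviation from `1` of the `k`-th factor in the infinite product for
`Γ(p + z) Γ(q + z) / (Γ(u + z) Γ(v + z))`, where `c = u v - p q`. -/
noncomputable def gammaRatioTerm (c p q : ℂ) (k : ℕ) (z : ℂ) : ℂ :=
  c * ((p + k + z)⁻¹ * (q + k + z)⁻¹)

theorem one_add_gammaRatioTerm (h : p + q = u + v) {k : ℕ} {z : ℂ} (hp : p + k + z ≠ 0)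
    (hq : q + k + z ≠ 0) :
    1 + gammaRatioTerm (u * v - p * q) p q k z =
      (u + z + k) * (v + z + k) / ((p + z + k) * (q + z + k)) := by
  rw [add_right_comm p z, add_right_comm q z, gammaRatioTerm]
  field_simp
  linear_combination (k + z) * h

theorem norm_gammaRatioTerm_le (c : ℂ) (hp : 0 ≤ p.re) (hq : 0 ≤ q.re) {k : ℕ} (hk : k ≠ 0)
    {z : ℂ} (hz : z ∈ rightHalfPlane) :
    ‖gammaRatioTerm c p q k z‖ ≤ ‖c‖ * ((k : ℝ) ^ 2)⁻¹ := by
  have hk' : (0 : ℝ) < k := Nat.cast_pos.2 (Nat.pos_of_ne_zero hk)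
  have hinv {w : ℂ} (hw : 0 ≤ w.re) : ‖(w + k + z)⁻¹‖ ≤ (k : ℝ)⁻¹ := by
    rw [norm_inv]
    refine inv_anti₀ hk' (le_trans ?_ (Complex.re_le_norm _))
    rw [Complex.add_re, Complex.add_re, Complex.natCast_re]
    linarith [show 0 < z.re from hz]
  calc ‖gammaRatioTerm c p q k z‖ = ‖c‖ * (‖(p + k + z)⁻¹‖ * ‖(q + k + z)⁻¹‖) := by
        rw [gammaRatioTerm, norm_mul, norm_mul]
    _ ≤ ‖c‖ * ((k : ℝ)⁻¹ * (k : ℝ)⁻¹) := by gcongr <;> exact hinv ‹_›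
    _ = ‖c‖ * ((k : ℝ) ^ 2)⁻¹ := by rw [sq, mul_inv]

theorem add_natCast_add_ne_zero (hp : 0 ≤ p.re) (k : ℕ) {z : ℂ} (hz : z ∈ rightHalfPlane) :
    p + k + z ≠ 0 := by
  refine Complex.ne_zero_of_re_pos (re_add_pos_of_mem_rightHalfPlane ?_ hz)
  rw [Complex.add_re, Complex.natCast_re]
  positivity

theorem continuousOn_gammaRatioTerm (c : ℂ) (hp : 0 ≤ p.re) (hq : 0 ≤ q.re) (k : ℕ) :
    ContinuousOn (gammaRatioTerm c p q k) rightHalfPlane := by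
  have hinv {w : ℂ} (hw : 0 ≤ w.re) : ContinuousOn (fun z ↦ (w + k + z)⁻¹) rightHalfPlane :=
    (continuousOn_const.add continuousOn_id).inv₀ fun _ ↦ add_natCast_add_ne_zero hw k
  exact continuousOn_const.mul ((hinv hp).mul (hinv hq))

theorem hasProdLocallyUniformlyOn_Gamma_mul_div_Gamma_mul (hp : 0 ≤ p.re) (hq : 0 ≤ q.re)
    (hu : 0 ≤ u.re) (hv : 0 ≤ v.re) (h : p + q = u + v) :
    HasProdLocallyUniformlyOn (fun k z ↦ 1 + gammaRatioTerm (u * v - p * q) p q k z)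
      (fun z ↦ Complex.Gamma (p + z) * Complex.Gamma (q + z) /
        (Complex.Gamma (u + z) * Complex.Gamma (v + z))) rightHalfPlane := by
  have hsum : Summable fun k : ℕ ↦ ‖u * v - p * q‖ * ((k : ℝ) ^ 2)⁻¹ :=
    (Real.summable_nat_pow_inv.2 one_lt_two).mul_left _
  have hprod := hsum.hasProdLocallyUniformlyOn_nat_one_add isOpen_rightHalfPlane
    ((eventually_ne_atTop 0).mono fun k hk z hz ↦ norm_gammaRatioTerm_le _ hp hq hk hz)
    (continuousOn_gammaRatioTerm _ hp hq)
  refine TendstoLocallyUniformlyOn.congr_right hprod fun z hz ↦ ?_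
  have hGamma {w : ℂ} (hw : 0 ≤ w.re) : Complex.Gamma (w + z) ≠ 0 :=
    Complex.Gamma_ne_zero_of_re_pos (re_add_pos_of_mem_rightHalfPlane hw hz)
  have hlim := tendsto_prod_range_Gamma_mul_div_Gamma_mul (p := p + z) (q := q + z)
    (by linear_combination h) (hGamma hu) (hGamma hv)
  refine tendsto_nhds_unique (hprod.hasProd hz).tendsto_prod_nat (hlim.congr fun n ↦ ?_)
  exact Finset.prod_congr rfl fun k _ ↦ (one_add_gammaRatioTerm h
    (add_natCast_add_ne_zero hp k hz) (add_natCast_add_ne_zero hq k hz)).symm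

theorem holomorphicCompletelyMonotone_gammaRatioTerm {c : ℂ} {p q : ℝ} (hc : 0 ≤ c) (hp : 0 ≤ p)
    (hq : 0 ≤ q) (k : ℕ) : HolomorphicCompletelyMonotone (gammaRatioTerm c p q k) := by
  have hinv {d : ℝ} (hd : 0 ≤ d) :
      HolomorphicCompletelyMonotone fun z ↦ ((d : ℂ) + k + z)⁻¹ := by
    simpa only [Complex.ofReal_add, Complex.ofReal_natCast] using
      HolomorphicCompletelyMonotone.inv_const_add (add_nonneg hd k.cast_nonneg)
  exact (HolomorphicCompletelyMonotone.const hc).mul ((hinv hp).mul (hinv hq))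

theorem holomorphicCompletelyMonotone_Gamma_mul_div_Gamma_mul {a b s : ℝ} (ha : 0 ≤ a)
    (hb : 0 ≤ b) (hs : 0 ≤ s) :
    HolomorphicCompletelyMonotone fun z ↦
      Complex.Gamma (a + z) * Complex.Gamma ((a + b + s : ℝ) + z) /
        (Complex.Gamma ((a + b : ℝ) + z) * Complex.Gamma ((a + s : ℝ) + z)) := by
  have hconst : (0 : ℂ) ≤ (a + b : ℝ) * (a + s : ℝ) - a * (a + b + s : ℝ) := by
    have hbs : (a + b) * (a + s) - a * (a + b + s) = b * s := by ring
    exact_mod_cast hbs ▸ mul_nonneg hb hs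
  have hq : 0 ≤ a + b + s := by positivity
  have hprod := hasProdLocallyUniformlyOn_Gamma_mul_div_Gamma_mul (p := a) (q := (a + b + s : ℝ))
    (u := (a + b : ℝ)) (v := (a + s : ℝ)) ha hq (add_nonneg ha hb) (add_nonneg ha hs)
    (by push_cast; ring)
  exact .of_hasProdLocallyUniformlyOn hprod fun k ↦
    (HolomorphicCompletelyMonotone.const zero_le_one).add
      (holomorphicCompletelyMonotone_gammaRatioTerm hconst ha hq k)

end GammaRatio

theorem gamma_ratio_completely_monotone (a b s : ℝ) (ha : 0 < a) (hb : 0 < b) (hs : 0 < s) :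
    CompletelyMonotoneOn (fun l =>
      Gamma (a + l) * Gamma (a + b + s + l) / (Gamma (a + b + l) * Gamma (a + s + l))) := by
  refine (holomorphicCompletelyMonotone_Gamma_mul_div_Gamma_mul ha.le hb.le
    hs.le).completelyMonotoneOn fun x _ ↦ ?_
  simp only [← Complex.ofReal_add, Complex.Gamma_ofReal, Complex.ofReal_mul, Complex.ofReal_div]
end
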